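/- Suppose the hard core of A is empty, H(A) = ∅ (weak learnability). Then Ker(Aᵀ) ∩ ℝ₊^m = {0}, so D¹_{ℝ₊^m ∩ Ker(Aᵀ)}(∇f(Aλ)) = ‖∇f(Aλ)‖₁ = f(Aλ) for every λ; and if moreover the ESO holds with constant β > 0 and γ̃(A, ℝ₊^m) > 0, then for every λ ∈ ℝ^n, taking δ_i = −(1/(β L_i))·∇_i F(λ), one has E[F(λ + δ_{[Ŝ]})] ≤ F(λ) − (τ/(2βn)) · γ̃(A, ℝ₊^m)². -/

import Mathlib

open Finset
open scoped BigOperators Classical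

noncomputable section

/-- Exponential loss `f(x) = (1/m) Σ_j exp(x_j)` (the normaliser `m` is fixed,
the index type may vary). -/
def fExp (m : ℕ) {ι : Type} [Fintype ι] (x : ι → ℝ) : ℝ :=
  (1 / (m : ℝ)) * ∑ j, Real.exp (x j)

/-- Gradient of the exponential loss. -/
def gradf (m : ℕ) {ι : Type} [Fintype ι] (x : ι → ℝ) : ι → ℝ :=
  fun j => fderiv ℝ (fExp m (ι := ι)) x (Pi.single j 1)

/-- `F(λ) = log f(Aλ)`. -/
def FObj {mr : Type} [Fintype mr] {n : ℕ} (m : ℕ) (A : Matrix mr (Fin n) ℝ)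
    (lam : Fin n → ℝ) : ℝ :=
  Real.log (fExp m (A.mulVec lam))

/-- Gradient of `F`: `(∇F(λ))_i` is the `i`-th partial derivative. -/
def gradF {mr : Type} [Fintype mr] {n : ℕ} (m : ℕ) (A : Matrix mr (Fin n) ℝ)
    (lam : Fin n → ℝ) : Fin n → ℝ :=
  fun i => fderiv ℝ (FObj m A) lam (Pi.single i 1)

/-- Coordinate-wise Lipschitz constants `L_i = max_j A_{j,i}²`. -/
def Lip {mr : Type} [Fintype mr] {n : ℕ} (A : Matrix mr (Fin n) ℝ) (i : Fin n) : ℝ :=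
  ⨆ j, (A j i) ^ 2

/-- `h_{[S]}`: keep the coordinates of `h` in `S`, zero the others. -/
def restr {n : ℕ} (h : Fin n → ℝ) (S : Finset (Fin n)) : Fin n → ℝ :=
  fun i => if i ∈ S then h i else 0

/-- Expectation over the `τ`-nice sampling (uniform over subsets of cardinality `τ`). -/
def niceExp (n τ : ℕ) (g : Finset (Fin n) → ℝ) : ℝ :=
  (∑ S ∈ Finset.powersetCard τ (Finset.univ : Finset (Fin n)), g S) /
    ((Finset.powersetCard τ (Finset.univ : Finset (Fin n))).card : ℝ)

/-- Expected Separable Overapproximation with constant `β` and weights `L`. -/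
def ESO {mr : Type} [Fintype mr] {n : ℕ} (m : ℕ) (A : Matrix mr (Fin n) ℝ)
    (τ : ℕ) (β : ℝ) : Prop :=
  ∀ x h : Fin n → ℝ,
    niceExp n τ (fun S => FObj m A (x + restr h S)) ≤
      FObj m A x + ((τ : ℝ) / (n : ℝ)) *
        ((∑ i, gradF m A x i * h i) + (β / 2) * ∑ i, Lip A i * h i ^ 2)

/-- ℓ¹ distance from `x` to a set `K`. -/
def D1 {ι : Type} [Fintype ι] (K : Set (ι → ℝ)) (x : ι → ℝ) : ℝ :=
  ⨅ z : K, ∑ j, |x j - (z : ι → ℝ) j|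

/-- Kernel of `Aᵀ`. -/
def kerAT {mr : Type} [Fintype mr] {n : ℕ} (A : Matrix mr (Fin n) ℝ) : Set (mr → ℝ) :=
  {φ | A.transpose.mulVec φ = 0}

/-- `‖g‖_{L⁻¹} = (Σ_i g_i²/L_i)^{1/2}`. -/
def normLinv {mr : Type} [Fintype mr] {n : ℕ} (A : Matrix mr (Fin n) ℝ)
    (g : Fin n → ℝ) : ℝ :=
  Real.sqrt (∑ i, g i ^ 2 / Lip A i)

/-- `γ̃(A,K)`. -/
def gammaT {mr : Type} [Fintype mr] {n : ℕ} (A : Matrix mr (Fin n) ℝ)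
    (K : Set (mr → ℝ)) : ℝ :=
  ⨅ φ : {φ : mr → ℝ // φ ∈ K ∧ φ ∉ kerAT A},
    normLinv A (A.transpose.mulVec (φ : mr → ℝ)) / D1 (K ∩ kerAT A) (φ : mr → ℝ)

/-- Hard core `H(A)`. -/
def hardCore {mr : Type} [Fintype mr] {n : ℕ} (A : Matrix mr (Fin n) ℝ) : Set mr :=
  {j | ∃ φ : mr → ℝ, φ ∈ kerAT A ∧ (∀ k, 0 ≤ φ k) ∧ 0 < φ j}

/-- Parallel Adaboost iterates, given the sequence of sampled coordinate sets. -/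
def iter {mr : Type} [Fintype mr] {n : ℕ} (m : ℕ) (A : Matrix mr (Fin n) ℝ) (β : ℝ)
    (lam0 : Fin n → ℝ) (s : ℕ → Finset (Fin n)) : ℕ → Fin n → ℝ
  | 0 => lam0
  | t + 1 =>
    let lt := iter m A β lam0 s t
    let lt' : Fin n → ℝ := fun i =>
      if i ∈ s t then lt i - (1 / (β * Lip A i)) * gradF m A lt i else lt i
    if FObj m A lt' ≤ FObj m A lt then lt' else lt

theorem fExp_hasFDerivAt (m : ℕ) {ι : Type} [Fintype ι] (x : ι → ℝ) :
    HasFDerivAt (fExp m (ι := ι))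
      ((1 / (m : ℝ)) • ∑ j, Real.exp (x j) • (ContinuousLinearMap.proj j : (ι → ℝ) →L[ℝ] ℝ)) x := by
  unfold fExp
  refine HasFDerivAt.const_mul ?_ _
  refine HasFDerivAt.fun_sum fun j _ => ?_
  exact (ContinuousLinearMap.proj (R := ℝ) (φ := fun _ : ι => ℝ) j).hasFDerivAt.exp

theorem gradf_eq (m : ℕ) {ι : Type} [Fintype ι] (x : ι → ℝ) (j : ι) :
    gradf m x j = (1 / (m : ℝ)) * Real.exp (x j) := by
  unfold gradf
  rw [(fExp_hasFDerivAt m x).fderiv]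
  simp [Pi.single_apply]

theorem fExp_pos {m : ℕ} (hm : 1 ≤ m) (x : Fin m → ℝ) : 0 < fExp m x := by
  unfold fExp
  have h0 : (0 : ℝ) < m := by exact_mod_cast hm
  haveI : Nonempty (Fin m) := ⟨⟨0, hm⟩⟩
  have : 0 < ∑ j, Real.exp (x j) :=
    Finset.sum_pos (fun j _ => Real.exp_pos _) Finset.univ_nonempty
  positivity

theorem gradF_eq {m n : ℕ} (hm : 1 ≤ m) (A : Matrix (Fin m) (Fin n) ℝ) (lam : Fin n → ℝ)
    (i : Fin n) :
    gradF m A lam i =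
      A.transpose.mulVec (gradf m (A.mulVec lam)) i / fExp m (A.mulVec lam) := by
  have hlin : HasFDerivAt (fun l : Fin n → ℝ => A.mulVec l)
      (LinearMap.toContinuousLinearMap A.mulVecLin) lam :=
    (LinearMap.toContinuousLinearMap A.mulVecLin).hasFDerivAt
  have h := ((fExp_hasFDerivAt m (A.mulVec lam)).comp lam hlin).log (fExp_pos hm _).ne'
  have h2 : HasFDerivAt (FObj m A) _ lam := h
  unfold gradF
  rw [h2.fderiv]
  simp only [Matrix.mulVec, dotProduct, gradf_eq, Matrix.transpose_apply]
  simp [Matrix.mulVec, dotProduct, Pi.single_apply]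
  rw [div_eq_inv_mul, Finset.mul_sum]
  congr 1
  exact Finset.sum_congr rfl fun j _ => by ring

theorem ker_inter {m n : ℕ} (A : Matrix (Fin m) (Fin n) ℝ) (hH : hardCore A = ∅) :
    kerAT A ∩ {φ : Fin m → ℝ | ∀ k, 0 ≤ φ k} = {0} := by
  ext φ
  constructor
  · rintro ⟨h1, h2⟩
    rw [Set.mem_singleton_iff]
    funext j
    by_contra hne
    have : j ∈ hardCore A := ⟨φ, h1, h2, lt_of_le_of_ne (h2 j) (Ne.symm hne)⟩
    rw [hH] at this
    exact this
  · rintro rfl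
    exact ⟨by simp [kerAT], fun k => le_refl _⟩

theorem Lip_pos {m n : ℕ} (A : Matrix (Fin m) (Fin n) ℝ)
    (hA : ∀ i : Fin n, ∃ j : Fin m, A j i ≠ 0) (i : Fin n) : 0 < Lip A i := by
  obtain ⟨j, hj⟩ := hA i
  have h : (A j i) ^ 2 ≤ Lip A i :=
    le_ciSup (f := fun j => (A j i) ^ 2) (Set.finite_range _).bddAbove j
  have : 0 < (A j i) ^ 2 := by positivity
  linarith

theorem D1_zero {m : ℕ} (x : Fin m → ℝ) : D1 {0} x = ∑ j, |x j| := by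
  unfold D1
  rw [ciInf_unique]
  simp

/-- under weak learnability (`H(A) = ∅`), `Ker Aᵀ ∩ ℝ₊^m = {0}`,
hence `D¹_{ℝ₊^m ∩ Ker Aᵀ}(∇f(Aλ)) = ‖∇f(Aλ)‖₁ = f(Aλ)`; and under the ESO with
`γ̃(A,ℝ₊^m) > 0`, the expected decrease is at least `(τ/(2βn))·γ̃(A,ℝ₊^m)²`. -/
theorem stmt8 {m n : ℕ} (hm : 1 ≤ m) (hn : 1 ≤ n) (A : Matrix (Fin m) (Fin n) ℝ)
    (hA : ∀ i : Fin n, ∃ j : Fin m, A j i ≠ 0)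
    (τ : ℕ) (hτ1 : 1 ≤ τ) (hτn : τ ≤ n)
    (hH : hardCore A = ∅) :
    kerAT A ∩ {φ : Fin m → ℝ | ∀ k, 0 ≤ φ k} = {0} ∧
    (∀ lam : Fin n → ℝ,
      D1 ({φ : Fin m → ℝ | ∀ k, 0 ≤ φ k} ∩ kerAT A) (gradf m (A.mulVec lam))
          = ∑ j, |gradf m (A.mulVec lam) j| ∧
      (∑ j, |gradf m (A.mulVec lam) j|) = fExp m (A.mulVec lam)) ∧
    ∀ β : ℝ, 0 < β → ESO m A τ β →
      0 < gammaT A {φ : Fin m → ℝ | ∀ k, 0 ≤ φ k} →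
      ∀ lam δ : Fin n → ℝ, (∀ i, δ i = -(1 / (β * Lip A i)) * gradF m A lam i) →
        niceExp n τ (fun S => FObj m A (lam + restr δ S)) ≤
          FObj m A lam - (τ : ℝ) / (2 * β * (n : ℝ)) *
            gammaT A {φ : Fin m → ℝ | ∀ k, 0 ≤ φ k} ^ 2 := by
  have hker := ker_inter A hH
  have hker' : {φ : Fin m → ℝ | ∀ k, 0 ≤ φ k} ∩ kerAT A = {0} := by
    rw [Set.inter_comm]; exact hker
  have hsum : ∀ lam : Fin n → ℝ,
      (∑ j, |gradf m (A.mulVec lam) j|) = fExp m (A.mulVec lam) := by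
    intro lam
    unfold fExp
    rw [Finset.mul_sum]
    refine Finset.sum_congr rfl fun j _ => ?_
    rw [gradf_eq, abs_of_nonneg (by positivity)]
  refine ⟨hker, fun lam => ⟨by rw [hker', D1_zero], hsum lam⟩, ?_⟩
  intro β hβ hESO hγ lam δ hδ
  have hL := Lip_pos A hA
  have hf := fExp_pos hm (A.mulVec lam)
  set g := gradf m (A.mulVec lam) with hg
  have hgnn : ∀ k, 0 ≤ g k := fun k => by rw [hg, gradf_eq]; positivity
  have hgk : g ∉ kerAT A := by
    intro hk
    have h0 : g ∈ ({0} : Set (Fin m → ℝ)) := hker ▸ ⟨hk, hgnn⟩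
    rw [Set.mem_singleton_iff] at h0
    have h1 := hsum lam
    rw [← hg, h0] at h1
    simp at h1
    linarith
  have hle : gammaT A {φ : Fin m → ℝ | ∀ k, 0 ≤ φ k} ≤
      normLinv A (A.transpose.mulVec g) / fExp m (A.mulVec lam) := by
    have hb : gammaT A {φ : Fin m → ℝ | ∀ k, 0 ≤ φ k} ≤
        normLinv A (A.transpose.mulVec g) /
          D1 ({φ : Fin m → ℝ | ∀ k, 0 ≤ φ k} ∩ kerAT A) g := by
      refine ciInf_le (f := fun φ : {φ : Fin m → ℝ //
        φ ∈ {φ : Fin m → ℝ | ∀ k, 0 ≤ φ k} ∧ φ ∉ kerAT A} =>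
          normLinv A (A.transpose.mulVec (φ : Fin m → ℝ)) /
            D1 ({φ : Fin m → ℝ | ∀ k, 0 ≤ φ k} ∩ kerAT A) (φ : Fin m → ℝ)) ?_ ⟨g, hgnn, hgk⟩
      refine ⟨0, ?_⟩
      rintro _ ⟨φ, rfl⟩
      refine div_nonneg (Real.sqrt_nonneg _) ?_
      rw [hker', D1_zero]
      positivity
    rwa [hker', D1_zero, hsum lam] at hb
  have hsq : gammaT A {φ : Fin m → ℝ | ∀ k, 0 ≤ φ k} ^ 2 ≤
      ∑ i, gradF m A lam i ^ 2 / Lip A i := by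
    refine (pow_le_pow_left₀ hγ.le hle 2).trans (le_of_eq ?_)
    unfold normLinv
    rw [div_pow, Real.sq_sqrt (Finset.sum_nonneg fun i _ => div_nonneg (sq_nonneg _) (hL i).le),
      Finset.sum_div]
    refine Finset.sum_congr rfl fun i _ => ?_
    rw [gradF_eq hm, div_pow, div_right_comm]
  have hE := hESO lam δ
  have hid : (∑ i, gradF m A lam i * δ i) + (β / 2) * ∑ i, Lip A i * δ i ^ 2 =
      -(1 / (2 * β)) * ∑ i, gradF m A lam i ^ 2 / Lip A i := by
    rw [Finset.mul_sum, Finset.mul_sum, ← Finset.sum_add_distrib]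
    refine Finset.sum_congr rfl fun i _ => ?_
    rw [hδ i]
    have := (hL i).ne'
    field_simp
    ring
  rw [hid] at hE
  refine hE.trans ?_
  have hnpos : (0 : ℝ) < n := by exact_mod_cast hn
  have hc : (0 : ℝ) ≤ (τ : ℝ) / (2 * β * (n : ℝ)) := by positivity
  have h3 := mul_le_mul_of_nonneg_left hsq hc
  have h4 : (τ : ℝ) / (n : ℝ) * (-(1 / (2 * β)) * ∑ i, gradF m A lam i ^ 2 / Lip A i) =
      -((τ : ℝ) / (2 * β * (n : ℝ)) * ∑ i, gradF m A lam i ^ 2 / Lip A i) := by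
    field_simp
  rw [h4]
  linarith

end
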